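/- arXiv:1805.04261 — 2 statements merged into one kernel-verified Lean document; each statement's English description precedes it below -/
import Mathlib

section
/- Let d be an odd positive integer, let σ be a sign pattern of length d+1, and let U be a SAP for σ such that the couple (σ, U) is realizable by some polynomial. Let σ* (resp. σ†) denote the sign pattern of length d+2 obtained from σ by appending a sign +1 (resp. −1) on the right. Then the couple (σ*, ((0,0), U)) is realizable and the couple (σ†, ((1,1), U)) is realizable, where ((a,b), U) denotes the sequence of d+1 pairs beginning with (a,b) and followed by the pairs of U. -/
open Polynomial

/-- Number of sign changes among consecutive entries `s 0, …, s n`. -/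
def signChanges (s : ℕ → ℤ) (n : ℕ) : ℕ :=
  ((Finset.range n).filter (fun i => s i * s (i + 1) < 0)).card

/-- Number of sign preservations among consecutive entries `s 0, …, s n`. -/
def signPres (s : ℕ → ℤ) (n : ℕ) : ℕ :=
  ((Finset.range n).filter (fun i => 0 < s i * s (i + 1))).card

/-- `s` encodes a sign pattern of length `d+1` (entries `s 0, …, s d`, each `±1`,
first entry `+1`). -/
def IsSignPattern (d : ℕ) (s : ℕ → ℤ) : Prop :=
  s 0 = 1 ∧ ∀ i ≤ d, s i = 1 ∨ s i = -1

/-- `pn k = (pos_k, neg_k)`, `k = 0, …, d-1`, is a sequence of admissible pairs (SAP)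
for the sign pattern `s` of length `d+1`: each pair is admissible for the truncated
pattern `σ_k` (of length `d+1-k`, with sign changes `signChanges s (d-k)` and sign
preservations `signPres s (d-k)`), the last entry of `σ_k` is `(-1)^{pos_k}`, and the
Rolle-type inequalities and parity condition hold between consecutive pairs. -/
def IsSAP (d : ℕ) (s : ℕ → ℤ) (pn : ℕ → ℕ × ℕ) : Prop :=
  (∀ k < d,
    (pn k).1 ≤ signChanges s (d - k) ∧
    Even ((signChanges s (d - k) : ℤ) - (pn k).1) ∧
    (pn k).2 ≤ signPres s (d - k) ∧
    Even ((signPres s (d - k) : ℤ) - (pn k).2) ∧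
    s (d - k) = (-1) ^ (pn k).1) ∧
  (∀ k, k + 1 < d →
    (pn k).1 ≤ (pn (k + 1)).1 + 1 ∧
    (pn k).2 ≤ (pn (k + 1)).2 + 1 ∧
    (pn k).1 + (pn k).2 ≤ (pn (k + 1)).1 + (pn (k + 1)).2 + 1 ∧
    Even (((pn (k + 1)).1 : ℤ) + (pn (k + 1)).2 + 3 - (pn k).1 - (pn k).2))

/-- The `k`-th derivative of a real polynomial. -/
noncomputable def iterDeriv : ℕ → Polynomial ℝ → Polynomial ℝ
  | 0, P => P
  | k + 1, P => Polynomial.derivative (iterDeriv k P)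

/-- `P` has exactly `pos` positive real roots and exactly `neg` negative real roots,
all of them simple. -/
def CountRoots (P : Polynomial ℝ) (pos neg : ℕ) : Prop :=
  {x : ℝ | 0 < x ∧ P.eval x = 0}.ncard = pos ∧
  {x : ℝ | x < 0 ∧ P.eval x = 0}.ncard = neg ∧
  ∀ x : ℝ, P.eval x = 0 → (Polynomial.derivative P).eval x ≠ 0

/-- The couple (sign pattern `s`, SAP `pn`) of degree `d` is realizable: there is a
monic real polynomial of degree `d`, with all coefficients nonzero, whose coefficient
signs define the pattern `s` (the sign of the coefficient of `x^(d-i)` is `s i`), and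
such that for `k = 0, …, d-1` the `k`-th derivative has exactly `(pn k).1` positive and
`(pn k).2` negative real roots, all simple. -/
def Realizable (d : ℕ) (s : ℕ → ℤ) (pn : ℕ → ℕ × ℕ) : Prop :=
  ∃ P : Polynomial ℝ, P.Monic ∧ P.natDegree = d ∧
    (∀ j ≤ d, P.coeff j ≠ 0) ∧
    (∀ i ≤ d, 0 < (s i : ℝ) * P.coeff (d - i)) ∧
    ∀ k < d, CountRoots (iterDeriv k P) (pn k).1 (pn k).2

/-!
A monic primitive `Q` of `(d + 1) P` has even degree, so `Q x → +∞` as `x → ±∞`, and the higher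
derivatives of `Q - c` carry the root counts of `P` whatever the constant `c`. For `c` far below
zero, `Q - c` has no real root. For `c` large, the level `c` lies above every critical value of `Q`
and above `Q` on any given compact interval, so `Q` crosses it exactly once on each side of the
origin, transversally.
-/

open Filter Set

section Primitive

variable {K : Type*} [Field K] [CharZero K]

lemma exists_derivative_eq_and_coeff_zero_eq_zero (p : K[X]) :
    ∃ q : K[X], derivative q = p ∧ q.coeff 0 = 0 := by
  induction p using Polynomial.induction_on' with
  | add p₁ p₂ h₁ h₂ =>
    obtain ⟨q₁, rfl, hq₁⟩ := h₁
    obtain ⟨q₂, rfl, hq₂⟩ := h₂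
    exact ⟨q₁ + q₂, derivative_add, by rw [coeff_add, hq₁, hq₂, add_zero]⟩
  | monomial n a =>
    refine ⟨monomial (n + 1) (a / (n + 1)), ?_, coeff_monomial_of_ne _ n.succ_ne_zero.symm⟩
    have hn : (n + 1 : K) ≠ 0 := n.cast_add_one_ne_zero
    rw [derivative_monomial, Nat.cast_add_one, div_mul_cancel₀ a hn, Nat.add_sub_cancel]

variable {p q : K[X]}

lemma natDegree_eq_succ_of_derivative_eq_C_mul {a : K} (ha : a ≠ 0) (hp : p ≠ 0)
    (h : derivative q = C a * p) : q.natDegree = p.natDegree + 1 := by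
  have hq : q.natDegree ≠ 0 := derivative_ne_zero.1 (h ▸ mul_ne_zero (C_ne_zero.2 ha) hp)
  have hdeg : q.natDegree - 1 = p.natDegree := by
    rw [← natDegree_derivative, h, natDegree_C_mul ha]
  lia

lemma monic_of_derivative_eq_C_mul (hp : p.Monic)
    (h : derivative q = C (p.natDegree + 1 : K) * p) : q.Monic := by
  have hne : (p.natDegree + 1 : K) ≠ 0 := Nat.cast_add_one_ne_zero _
  have hlead := congrArg leadingCoeff h
  rw [leadingCoeff_derivative, natDegree_eq_succ_of_derivative_eq_C_mul hne hp.ne_zero h,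
    leadingCoeff_C_mul_of_isUnit hne.isUnit, hp.leadingCoeff, Nat.cast_add_one, mul_comm] at hlead
  exact mul_left_cancel₀ hne hlead

lemma coeff_succ_of_derivative_eq_C_mul {a : K} (h : derivative q = C a * p) (n : ℕ) :
    q.coeff (n + 1) = a / (n + 1) * p.coeff n := by
  have hn : (n + 1 : K) ≠ 0 := n.cast_add_one_ne_zero
  have hcoeff := congrArg (coeff · n) h
  rw [coeff_derivative, coeff_C_mul] at hcoeff
  rw [div_mul_eq_mul_div, eq_div_iff hn, hcoeff]

end Primitive

section LevelSets

lemma eventually_ncard_Ioi_fiber_eq_one {f : ℝ → ℝ} {a R : ℝ} (hf : ContinuousOn f (Ici a))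
    (htop : Tendsto f atTop atTop) (hinj : InjOn f (Ici R)) :
    ∀ᶠ c in atTop, {x | a < x ∧ f x = c}.ncard = 1 := by
  set b := max a R
  obtain ⟨B, hB⟩ := isCompact_Icc.bddAbove_image (hf.mono (Icc_subset_Ici_self : Icc a b ⊆ Ici a))
  filter_upwards [eventually_gt_atTop B] with c hc
  have hbeyond : ∀ x, a ≤ x → f x = c → b < x := by
    intro x hax hx
    by_contra! hxb
    exact (hB ⟨x, ⟨hax, hxb⟩, hx⟩).not_gt hc
  have hfb : f b < c := (hB ⟨b, ⟨le_max_left a R, le_rfl⟩, rfl⟩).trans_lt hc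
  obtain ⟨x, hbx, hx⟩ :=
    intermediate_value_Ioi (hf.mono (Ici_subset_Ici.2 (le_max_left a R))) htop hfb
  refine ncard_eq_one.2 ⟨x, Subset.antisymm ?_ ?_⟩
  · rintro y ⟨hay, hy⟩
    exact hinj ((le_max_right a R).trans (hbeyond y hay.le hy).le)
      ((le_max_right a R).trans (le_of_lt hbx)) (hy.trans hx.symm)
  · rintro _ rfl
    exact ⟨(le_max_left a R).trans_lt hbx, hx⟩

variable {Q : ℝ[X]}

lemma exists_injOn_Ici_eval (hQ : derivative Q ≠ 0) : ∃ R, InjOn (Q.eval ·) (Ici R) := by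
  obtain ⟨R, hR⟩ := eventually_atTop.1 (eventually_atTop_not_isRoot _ hQ)
  refine ⟨R, fun x hx y hy hxy ↦ ?_⟩
  wlog hlt : x < y generalizing x y
  · rcases (not_lt.1 hlt).eq_or_lt with heq | hgt
    · exact heq.symm
    · exact (this y hy x hx hxy.symm hgt).symm
  obtain ⟨z, hz, hz0⟩ :=
    exists_hasDerivAt_eq_zero hlt Q.continuousOn hxy fun z _ ↦ Q.hasDerivAt z
  exact absurd hz0 (hR z (le_trans hx hz.1.le))

lemma derivative_ne_zero_of_tendsto_atTop (hQ : Tendsto (Q.eval ·) atTop atTop) :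
    derivative Q ≠ 0 :=
  derivative_ne_zero.2
    (natDegree_pos_iff_degree_pos.2 (Q.tendsto_atTop_iff_leadingCoeff_nonneg.1 hQ).1).ne'

lemma eventually_ncard_Ioi_eval_eq_one (hQ : Tendsto (Q.eval ·) atTop atTop) (a : ℝ) :
    ∀ᶠ c in atTop, {x | a < x ∧ Q.eval x = c}.ncard = 1 := by
  obtain ⟨R, hR⟩ := exists_injOn_Ici_eval (derivative_ne_zero_of_tendsto_atTop hQ)
  exact eventually_ncard_Ioi_fiber_eq_one Q.continuousOn hQ hR

lemma eventually_ncard_Iio_eval_eq_one (hQ : Tendsto (Q.eval ·) atBot atTop) (a : ℝ) :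
    ∀ᶠ c in atTop, {x | x < a ∧ Q.eval x = c}.ncard = 1 := by
  have hcomp : Tendsto ((Q.comp (-X)).eval ·) atTop atTop := by
    simpa [Function.comp_def] using hQ.comp tendsto_neg_atTop_atBot
  filter_upwards [eventually_ncard_Ioi_eval_eq_one hcomp (-a)] with c hc
  have himage : {x | x < a ∧ Q.eval x = c} =
      Neg.neg '' {x | -a < x ∧ (Q.comp (-X)).eval x = c} := by
    ext x
    simp
  rw [himage, ncard_image_of_injective _ neg_injective, hc]

lemma eventually_eval_derivative_ne_zero_of_eval_eq (hQ : derivative Q ≠ 0) :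
    ∀ᶠ c in atTop, ∀ x, Q.eval x = c → (derivative Q).eval x ≠ 0 := by
  have hcrit : {x | (derivative Q).eval x = 0}.Finite := finite_setOfPred_isRoot hQ
  filter_upwards [atTop_le_cofinite (hcrit.image (Q.eval ·)).eventually_cofinite_notMem]
    with c hc x hx hx0
  exact hc ⟨x, hx0, hx⟩

lemma eventually_countRoots_sub_C_one_one (hQ : Tendsto (Q.eval ·) (cocompact ℝ) atTop) :
    ∀ᶠ c in atTop, CountRoots (Q - C c) 1 1 := by
  have htop := hQ.mono_left atTop_le_cocompact
  filter_upwards [eventually_ncard_Ioi_eval_eq_one htop 0,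
    eventually_ncard_Iio_eval_eq_one (hQ.mono_left atBot_le_cocompact) 0,
    eventually_eval_derivative_ne_zero_of_eval_eq (derivative_ne_zero_of_tendsto_atTop htop)]
    with c hpos hneg hsimple
  simp only [CountRoots, eval_sub, eval_C, sub_eq_zero, derivative_sub, derivative_C, sub_zero]
  exact ⟨hpos, hneg, hsimple⟩

lemma countRoots_zero_zero (h : ∀ x, Q.eval x ≠ 0) : CountRoots Q 0 0 := by
  simp [CountRoots, h]

lemma eventually_countRoots_sub_C_zero_zero (hQ : Tendsto (Q.eval ·) (cocompact ℝ) atTop) :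
    ∀ᶠ c in atBot, CountRoots (Q - C c) 0 0 := by
  obtain ⟨m, hm⟩ := Q.continuous.exists_forall_le hQ
  filter_upwards [eventually_lt_atBot (Q.eval m)] with c hc
  refine countRoots_zero_zero fun x ↦ ?_
  rw [eval_sub, eval_C]
  exact (sub_pos.2 (hc.trans_le (hm x))).ne'

lemma tendsto_eval_cocompact_atTop_of_even (hdeg : 0 < Q.degree) (heven : Even Q.natDegree)
    (hlead : 0 ≤ Q.leadingCoeff) : Tendsto (Q.eval ·) (cocompact ℝ) atTop := by
  have hcomp : Tendsto ((Q.comp (-X)).eval ·) atTop atTop :=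
    tendsto_atTop_of_leadingCoeff_nonneg _ (by rwa [degree_comp_neg_X])
      (by rwa [comp_neg_X_leadingCoeff_eq, heven.neg_one_pow, one_mul])
  rw [cocompact_eq_atBot_atTop, tendsto_sup]
  exact ⟨by simpa [Function.comp_def] using hcomp.comp tendsto_neg_atBot_atTop,
    Q.tendsto_atTop_of_leadingCoeff_nonneg hdeg hlead⟩

end LevelSets

section Realization

lemma iterDeriv_eq_iterate_derivative (k : ℕ) (P : ℝ[X]) : iterDeriv k P = derivative^[k] P := by
  induction k with
  | zero => rfl
  | succ k ih => rw [iterDeriv, ih, Function.iterate_succ_apply']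

lemma CountRoots.C_mul {P : ℝ[X]} {pos neg : ℕ} (h : CountRoots P pos neg) {a : ℝ} (ha : a ≠ 0) :
    CountRoots (C a * P) pos neg := by
  simpa [CountRoots, ha] using h

/-- The polynomial `P` realizes the couple (sign pattern `s`, SAP `pn`) of degree `d`: it is a
witness for `Realizable d s pn`. -/
def IsRealizedBy (d : ℕ) (s : ℕ → ℤ) (pn : ℕ → ℕ × ℕ) (P : ℝ[X]) : Prop :=
  P.Monic ∧ P.natDegree = d ∧
    (∀ j ≤ d, P.coeff j ≠ 0) ∧
    (∀ i ≤ d, 0 < (s i : ℝ) * P.coeff (d - i)) ∧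
    ∀ k < d, CountRoots (iterDeriv k P) (pn k).1 (pn k).2

lemma IsRealizedBy.of_derivative_eq {d : ℕ} {s : ℕ → ℤ} {pn : ℕ → ℕ × ℕ} {P Q : ℝ[X]}
    (hP : IsRealizedBy d s pn P) (hQ : derivative Q = C (d + 1 : ℝ) * P)
    {e : ℤ} (he : 0 < (e : ℝ) * Q.coeff 0) {r : ℕ × ℕ} (hr : CountRoots Q r.1 r.2) :
    IsRealizedBy (d + 1) (fun i => if i = d + 1 then e else s i)
      (fun k => if k = 0 then r else pn (k - 1)) Q := by
  obtain ⟨hmonic, rfl, hne, hsign, hroots⟩ := hP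
  have hd : (P.natDegree + 1 : ℝ) ≠ 0 := Nat.cast_add_one_ne_zero _
  refine ⟨monic_of_derivative_eq_C_mul hmonic hQ,
    natDegree_eq_succ_of_derivative_eq_C_mul hd hmonic.ne_zero hQ, ?_, ?_, ?_⟩
  · rintro (_ | j) hj
    · exact right_ne_zero_of_mul he.ne'
    · rw [coeff_succ_of_derivative_eq_C_mul hQ]
      exact mul_ne_zero (by positivity) (hne j (by lia))
  · intro i hi
    rcases hi.eq_or_lt with rfl | hlt
    · simpa using he
    · simp only [if_neg hlt.ne]
      rw [Nat.sub_add_comm (by lia), coeff_succ_of_derivative_eq_C_mul hQ, mul_left_comm]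
      exact mul_pos (by positivity) (hsign i (by lia))
  · rintro (_ | k) hk
    · exact hr
    · have hiter : iterDeriv (k + 1) Q = C (P.natDegree + 1 : ℝ) * iterDeriv k P := by
        simp only [iterDeriv_eq_iterate_derivative, Function.iterate_succ_apply, hQ,
          iterate_derivative_C_mul]
      rw [hiter]
      exact (hroots k (by lia)).C_mul hd

end Realization

/-- Extension of a realizable couple (sign pattern, SAP) of odd degree `d` by
appending a `+` (resp. a `-`) sign and the pair `(0,0)` (resp. `(1,1)`). -/
theorem stmt2 (d : ℕ) (hd : 0 < d) (hdodd : Odd d) (s : ℕ → ℤ)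
    (hs : IsSignPattern d s) (pn : ℕ → ℕ × ℕ) (hpn : IsSAP d s pn)
    (hre : Realizable d s pn) :
    Realizable (d + 1) (fun i => if i = d + 1 then 1 else s i)
      (fun k => if k = 0 then (0, 0) else pn (k - 1)) ∧
    Realizable (d + 1) (fun i => if i = d + 1 then -1 else s i)
      (fun k => if k = 0 then (1, 1) else pn (k - 1)) := by
  obtain ⟨P, hP : IsRealizedBy d s pn P⟩ := hre
  have ⟨hmonic, hdeg, _⟩ := hP
  obtain ⟨Q, hQ, hQ0⟩ := exists_derivative_eq_and_coeff_zero_eq_zero (C (d + 1 : ℝ) * P)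
  have hQdeg : Q.natDegree = d + 1 := hdeg ▸
    natDegree_eq_succ_of_derivative_eq_C_mul d.cast_add_one_ne_zero hmonic.ne_zero hQ
  have hQmonic : Q.Monic := monic_of_derivative_eq_C_mul hmonic (by rw [hQ, hdeg])
  have hlim : Tendsto (Q.eval ·) (cocompact ℝ) atTop :=
    tendsto_eval_cocompact_atTop_of_even (natDegree_pos_iff_degree_pos.1 (by lia))
      (hQdeg ▸ hdodd.add_one) (by simp [hQmonic.leadingCoeff])
  have hder (c : ℝ) : derivative (Q - C c) = C (d + 1 : ℝ) * P := by
    rw [derivative_sub, derivative_C, sub_zero, hQ]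
  constructor
  · obtain ⟨c, hroots, hc⟩ :=
      ((eventually_countRoots_sub_C_zero_zero hlim).and (eventually_lt_atBot 0)).exists
    exact ⟨Q - C c, hP.of_derivative_eq (hder c) (by simpa [hQ0] using hc) hroots⟩
  · obtain ⟨c, hroots, hc⟩ :=
      ((eventually_countRoots_sub_C_one_one hlim).and (eventually_gt_atTop 0)).exists
    exact ⟨Q - C c, hP.of_derivative_eq (hder c) (by simpa [hQ0] using hc) hroots⟩
end

section
/- For each d ∈ {1, 2, 3}, every couple (σ, SAP), where σ is a sign pattern of length d+1 and the SAP is a sequence of admissible pairs for σ, is realizable. -/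
open Polynomial

/-! The map `P(x) ↦ (-1) ^ d * P(-x)` interchanges positive and negative roots, and sign changes
and sign preservations, so one may assume that the coefficient of `x ^ (d - 1)` is positive. Then
the root of the linear derivative is negative, and admissibility together with the Rolle-type
conditions leaves `1`, `3`, `10` sequences for `d = 1, 2, 3`. Each has an explicit realization. For
`d = 3` it is taken in the form `(x - r) * (x ^ 2 + u * x + v)`, so that the positions of its roots,
like those of its quadratic derivative, follow from the signs of coefficients and discriminants. -/

section SignPatterns

variable {d n : ℕ} {s : ℕ → ℤ} {pn : ℕ → ℕ × ℕ}

lemma signChanges_succ (s : ℕ → ℤ) (n : ℕ) :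
    signChanges s (n + 1) = signChanges s n + if s n * s (n + 1) < 0 then 1 else 0 := by
  simp only [signChanges, Finset.card_filter, Finset.sum_range_succ]

lemma signPres_succ (s : ℕ → ℤ) (n : ℕ) :
    signPres s (n + 1) = signPres s n + if 0 < s n * s (n + 1) then 1 else 0 := by
  simp only [signPres, Finset.card_filter, Finset.sum_range_succ]

@[simp]
lemma signChanges_zero (s : ℕ → ℤ) : signChanges s 0 = 0 := rfl

@[simp]
lemma signPres_zero (s : ℕ → ℤ) : signPres s 0 = 0 := rfl

lemma IsSignPattern.ne_zero (hs : IsSignPattern d s) {i : ℕ} (hi : i ≤ d) : s i ≠ 0 := by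
  rcases hs.2 i hi with h | h <;> simp [h]

lemma IsSignPattern.signChanges_add_signPres (hs : IsSignPattern d s) (hn : n ≤ d) :
    signChanges s n + signPres s n = n := by
  induction n with
  | zero => rfl
  | succ n ih =>
    have hprod : s n * s (n + 1) ≠ 0 := mul_ne_zero (hs.ne_zero (by omega)) (hs.ne_zero hn)
    have ih := ih (by omega)
    rw [signChanges_succ, signPres_succ]
    split_ifs <;> omega

/-- The sign pattern of `(-1) ^ d * P (-x)`, where `P` is a monic polynomial of degree `d` with
sign pattern `s`. It does not depend on `d`, since patterns list the leading sign first. -/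
def reflectPattern (s : ℕ → ℤ) : ℕ → ℤ := fun i => (-1) ^ i * s i

@[simp]
lemma reflectPattern_reflectPattern (s : ℕ → ℤ) : reflectPattern (reflectPattern s) = s := by
  funext i
  simp only [reflectPattern, ← mul_assoc, ← mul_pow, neg_one_mul, neg_neg, one_pow, one_mul]

lemma reflectPattern_mul_succ (s : ℕ → ℤ) (i : ℕ) :
    reflectPattern s i * reflectPattern s (i + 1) = -(s i * s (i + 1)) := by
  have hsq : ((-1 : ℤ) ^ i) * (-1) ^ i = 1 := by rw [← mul_pow]; simp
  simp only [reflectPattern, pow_succ]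
  linear_combination (-(s i * s (i + 1))) * hsq

@[simp]
lemma signChanges_reflectPattern (s : ℕ → ℤ) (n : ℕ) :
    signChanges (reflectPattern s) n = signPres s n := by
  simp only [signChanges, signPres, reflectPattern_mul_succ, neg_lt_zero]

@[simp]
lemma signPres_reflectPattern (s : ℕ → ℤ) (n : ℕ) :
    signPres (reflectPattern s) n = signChanges s n := by
  simp only [signChanges, signPres, reflectPattern_mul_succ, neg_pos]

lemma IsSignPattern.reflect (hs : IsSignPattern d s) : IsSignPattern d (reflectPattern s) := by
  refine ⟨by simp [reflectPattern, hs.1], fun i hi => ?_⟩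
  rcases neg_one_pow_eq_or ℤ i with h | h <;> rcases hs.2 i hi with h' | h' <;>
    simp [reflectPattern, h, h']

lemma IsSAP.reflect (hs : IsSignPattern d s) (h : IsSAP d s pn) :
    IsSAP d (reflectPattern s) fun k => (pn k).swap := by
  refine ⟨fun k hk => ?_, fun k hk => ?_⟩
  · obtain ⟨hpos, hpos_even, hneg, hneg_even, hlast⟩ := h.1 k hk
    have hsum := hs.signChanges_add_signPres (Nat.sub_le d k)
    have hlast' : reflectPattern s (d - k) = (-1) ^ (pn k).2 := by
      rw [reflectPattern, hlast, ← pow_add]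
      apply neg_one_pow_congr
      grind
    simpa using ⟨hneg, hneg_even, hpos, hpos_even, hlast'⟩
  · obtain ⟨hpos, hneg, hsum, heven⟩ := h.2 k hk
    refine ⟨hneg, hpos, ?_, ?_⟩ <;> simp only [Prod.fst_swap, Prod.snd_swap]
    · omega
    · grind

lemma IsSAP.pair_linear (h : IsSAP (d + 1) s pn) (h0 : s 0 = 1) (h1 : s 1 = 1) :
    pn d = (0, 1) := by
  have hd := h.1 d (by omega)
  have hchanges : signChanges s 1 = 0 := by simp [signChanges_succ, h0, h1]
  have hpres : signPres s 1 = 1 := by simp [signPres_succ, h0, h1]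
  rw [Nat.add_sub_cancel_left, hchanges, hpres] at hd
  ext <;> grind

lemma IsSAP.pair_quadratic (h : IsSAP (d + 2) s pn) (hs : IsSignPattern (d + 2) s) (h1 : s 1 = 1) :
    pn d = (0, 2) ∨ pn d = (0, 0) ∨ pn d = (1, 1) := by
  have hd := h.1 d (by omega)
  rw [Nat.add_sub_cancel_left] at hd
  rcases hs.2 2 (by omega) with h2 | h2
  · have hchanges : signChanges s 2 = 0 := by simp [signChanges_succ, hs.1, h1, h2]
    have hpres : signPres s 2 = 2 := by simp [signPres_succ, hs.1, h1, h2]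
    grind
  · have hchanges : signChanges s 2 = 1 := by simp [signChanges_succ, hs.1, h1, h2]
    have hpres : signPres s 2 = 1 := by simp [signPres_succ, hs.1, h1, h2]
    grind

lemma IsSAP.pair_cubic (h : IsSAP (d + 3) s pn) (hs : IsSignPattern (d + 3) s) (h1 : s 1 = 1) :
    (pn (d + 1) = (0, 2) ∧ (pn d = (0, 3) ∨ pn d = (0, 1) ∨ pn d = (1, 2) ∨ pn d = (1, 0))) ∨
    (pn (d + 1) = (0, 0) ∧ (pn d = (0, 1) ∨ pn d = (1, 0))) ∨
    (pn (d + 1) = (1, 1) ∧ (pn d = (2, 1) ∨ pn d = (0, 1) ∨ pn d = (1, 2) ∨ pn d = (1, 0))) := by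
  obtain ⟨hpos, hneg, hsum, heven⟩ := h.2 d (by omega)
  obtain hpn | hpn | hpn := IsSAP.pair_quadratic (d := d + 1) h hs h1 <;>
  · rw [hpn] at hpos hneg hsum heven ⊢
    generalize pn d = p at *
    obtain ⟨pos, neg⟩ := p
    grind

end SignPatterns

section RootCounting

variable {P Q : ℝ[X]} {r : ℝ} {pos neg : ℕ}

lemma ncard_setOf_and_eval_X_sub_C_mul_eq_zero {R : Type*} [CommRing R] [IsDomain R] {Q : R[X]}
    {r : R} (hr : Q.eval r ≠ 0) (p : R → Prop) [Decidable (p r)] :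
    {x | p x ∧ ((X - C r) * Q).eval x = 0}.ncard =
      {x | p x ∧ Q.eval x = 0}.ncard + if p r then 1 else 0 := by
  have hfin : {x | p x ∧ Q.eval x = 0}.Finite :=
    (finite_setOfPred_isRoot (p := Q) (by rintro rfl; simp at hr)).subset fun x hx => hx.2
  split_ifs with hp
  · rw [← Set.ncard_insert_of_notMem (fun h => hr h.2) hfin]
    congr 1
    ext x
    simp only [eval_mul, eval_sub, eval_X, eval_C, mul_eq_zero, sub_eq_zero, Set.mem_ofPred_eq,
      Set.mem_insert_iff]
    grind
  · congr 1
    ext x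
    simp only [eval_mul, eval_sub, eval_X, eval_C, mul_eq_zero, sub_eq_zero, Set.mem_ofPred_eq]
    grind

lemma eval_derivative_X_sub_C_mul_ne_zero {R : Type*} [CommRing R] [IsDomain R] {Q : R[X]}
    {r x : R} (hsimple : Q.eval x = 0 → (derivative Q).eval x ≠ 0) (hr : Q.eval r ≠ 0)
    (hx : ((X - C r) * Q).eval x = 0) : (derivative ((X - C r) * Q)).eval x ≠ 0 := by
  have hderiv : (derivative ((X - C r) * Q)).eval x =
      Q.eval x + (x - r) * (derivative Q).eval x := by
    simp [derivative_mul]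
  rw [hderiv]
  rw [eval_mul, eval_sub, eval_X, eval_C] at hx
  rcases mul_eq_zero.1 hx with hxr | hQx
  · rw [sub_eq_zero.1 hxr]
    simpa using hr
  · have hne : x - r ≠ 0 := fun hxr => hr (by rwa [← sub_eq_zero.1 hxr])
    rw [hQx, zero_add]
    exact mul_ne_zero hne (hsimple hQx)

namespace CountRoots

lemma of_forall_eval_ne_zero (h : ∀ x, P.eval x ≠ 0) : CountRoots P 0 0 := by
  simp [CountRoots, h]

lemma X_sub_C_mul_of_pos (h : CountRoots Q pos neg) (hr : 0 < r) (hQ : Q.eval r ≠ 0) :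
    CountRoots ((X - C r) * Q) (pos + 1) neg := by
  refine ⟨?_, ?_, fun x => eval_derivative_X_sub_C_mul_ne_zero (h.2.2 x) hQ⟩
  · rw [ncard_setOf_and_eval_X_sub_C_mul_eq_zero hQ, h.1, if_pos hr]
  · rw [ncard_setOf_and_eval_X_sub_C_mul_eq_zero hQ, h.2.1, if_neg hr.not_gt, add_zero]

lemma X_sub_C_mul_of_neg (h : CountRoots Q pos neg) (hr : r < 0) (hQ : Q.eval r ≠ 0) :
    CountRoots ((X - C r) * Q) pos (neg + 1) := by
  refine ⟨?_, ?_, fun x => eval_derivative_X_sub_C_mul_ne_zero (h.2.2 x) hQ⟩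
  · rw [ncard_setOf_and_eval_X_sub_C_mul_eq_zero hQ, h.1, if_neg hr.not_gt, add_zero]
  · rw [ncard_setOf_and_eval_X_sub_C_mul_eq_zero hQ, h.2.1, if_pos hr]

lemma C_mul_comp_neg_X (h : CountRoots P pos neg) {c : ℝ} (hc : c ≠ 0) :
    CountRoots (C c * P.comp (-X)) neg pos := by
  refine ⟨?_, ?_, fun x hx => ?_⟩
  · rw [← h.2.1, ← Set.ncard_neg]
    congr 1
    ext x
    simp [hc]
  · rw [← h.1, ← Set.ncard_neg]
    congr 1
    ext x
    simp [hc]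
  · have hPx : P.eval (-x) = 0 := by simpa [hc] using hx
    simpa [derivative_comp, hc] using h.2.2 (-x) hPx

end CountRoots

lemma toPoly_linear_eq_mul {K : Type*} [Field K] {m b : K} (hm : m ≠ 0) :
    Cubic.toPoly ⟨0, 0, m, b⟩ = (X - C (-b / m)) * C m := by
  have hb : C b = C (b / m) * C m := by rw [← C_mul, div_mul_cancel₀ b hm]
  rw [Cubic.of_b_eq_zero', hb, neg_div, C_neg]
  ring

variable {m b c : ℝ}

lemma exists_toPoly_quadratic_eq_mul (hm : m ≠ 0) (hdisc : 0 < discrim m b c) :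
    ∃ r t, r ≠ t ∧ b = -(m * (r + t)) ∧ c = m * (r * t) ∧
      Cubic.toPoly ⟨0, m, b, c⟩ = (X - C r) * ((X - C t) * C m) := by
  set δ := √(discrim m b c)
  have hδ : δ ^ 2 = b ^ 2 - 4 * m * c := Real.sq_sqrt hdisc.le
  have hδ0 : 0 < δ := Real.sqrt_pos.2 hdisc
  have hsum : b = -(m * ((-b + δ) / (2 * m) + (-b - δ) / (2 * m))) := by field_simp; ring
  have hprod : c = m * ((-b + δ) / (2 * m) * ((-b - δ) / (2 * m))) := by
    field_simp
    linear_combination hδ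
  refine ⟨(-b + δ) / (2 * m), (-b - δ) / (2 * m), ?_, hsum, hprod, ?_⟩
  · rw [Ne, div_left_inj' (by positivity)]
    linarith
  · generalize (-b + δ) / (2 * m) = r at *
    generalize (-b - δ) / (2 * m) = t at *
    rw [Cubic.of_a_eq_zero', hsum, hprod]
    simp only [C_neg, C_mul, C_add]
    ring

lemma countRoots_linear_neg (h : 0 < m * b) : CountRoots (Cubic.toPoly ⟨0, 0, m, b⟩) 0 1 := by
  have hm : m ≠ 0 := left_ne_zero_of_mul h.ne'
  have hr : -b / m < 0 := by
    rw [neg_div, neg_lt_zero, div_pos_iff, ← mul_pos_iff]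
    rwa [mul_comm]
  rw [toPoly_linear_eq_mul hm]
  exact (CountRoots.of_forall_eval_ne_zero (by simpa)).X_sub_C_mul_of_neg hr (by simpa)

lemma countRoots_quadratic_none (hdisc : discrim m b c < 0) :
    CountRoots (Cubic.toPoly ⟨0, m, b, c⟩) 0 0 := by
  refine .of_forall_eval_ne_zero fun x => ?_
  have hne := quadratic_ne_zero_of_discrim_ne_sq
    (fun s hs => (hs ▸ hdisc).not_ge (sq_nonneg s)) x
  simpa [Cubic.toPoly, pow_two] using hne

lemma countRoots_quadratic_pos_neg (h : m * c < 0) :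
    CountRoots (Cubic.toPoly ⟨0, m, b, c⟩) 1 1 := by
  have hm : m ≠ 0 := left_ne_zero_of_mul h.ne
  have hdisc : 0 < discrim m b c := by rw [discrim]; nlinarith [sq_nonneg b]
  obtain ⟨r, t, hrt, -, rfl, hfactor⟩ := exists_toPoly_quadratic_eq_mul hm hdisc
  have hprod : r * t < 0 :=
    neg_of_mul_neg_right (by linarith : m * m * (r * t) < 0) (mul_self_nonneg m)
  have hconst : CountRoots (C m) 0 0 := .of_forall_eval_ne_zero (by simpa)
  have ht : (C m).eval t ≠ 0 := by simpa
  have hr : ((X - C t) * C m).eval r ≠ 0 := by simpa [sub_eq_zero, hm]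
  rw [hfactor]
  rcases mul_neg_iff.1 hprod with ⟨hr0, ht0⟩ | ⟨hr0, ht0⟩
  · exact (hconst.X_sub_C_mul_of_neg ht0 ht).X_sub_C_mul_of_pos hr0 hr
  · exact (hconst.X_sub_C_mul_of_pos ht0 ht).X_sub_C_mul_of_neg hr0 hr

lemma countRoots_quadratic_neg_neg (hdisc : 0 < discrim m b c) (hb : 0 < m * b) (hc : 0 < m * c) :
    CountRoots (Cubic.toPoly ⟨0, m, b, c⟩) 0 2 := by
  have hm : m ≠ 0 := left_ne_zero_of_mul hb.ne'
  obtain ⟨r, t, hrt, rfl, rfl, hfactor⟩ := exists_toPoly_quadratic_eq_mul hm hdisc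
  have hsum : r + t < 0 :=
    neg_of_mul_neg_right (by linarith : m * m * (r + t) < 0) (mul_self_nonneg m)
  have hprod : 0 < r * t :=
    pos_of_mul_pos_right (by linarith : 0 < m * m * (r * t)) (mul_self_nonneg m)
  have hneg : r < 0 ∧ t < 0 := by
    rcases mul_pos_iff.1 hprod with h | h
    · linarith
    · exact h
  have hconst : CountRoots (C m) 0 0 := .of_forall_eval_ne_zero (by simpa)
  rw [hfactor]
  exact (hconst.X_sub_C_mul_of_neg hneg.2 (by simpa)).X_sub_C_mul_of_neg hneg.1
    (by simpa [sub_eq_zero, hm])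

end RootCounting

section Realizability

variable {d : ℕ} {s : ℕ → ℤ} {pn : ℕ → ℕ × ℕ}

lemma realizable_of_monic {P : ℝ[X]} (hP : P.Monic) (hdeg : P.natDegree = d)
    (hsign : ∀ i ≤ d, 0 < (s i : ℝ) * P.coeff (d - i))
    (hroots : ∀ k < d, CountRoots (iterDeriv k P) (pn k).1 (pn k).2) : Realizable d s pn := by
  refine ⟨P, hP, hdeg, fun j hj => ?_, hsign, hroots⟩
  have hj' := hsign (d - j) (Nat.sub_le d j)
  rw [Nat.sub_sub_self hj] at hj'
  exact right_ne_zero_of_mul hj'.ne'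

lemma iterDeriv_C_mul_comp_neg_X (c : ℝ) (P : ℝ[X]) (k : ℕ) :
    iterDeriv k (C c * P.comp (-X)) = C (c * (-1) ^ k) * (iterDeriv k P).comp (-X) := by
  induction k with
  | zero => simp [iterDeriv]
  | succ k ih =>
    rw [iterDeriv, ih, derivative_C_mul, derivative_comp, iterDeriv, pow_succ, ← mul_assoc]
    simp

lemma Realizable.reflect (h : Realizable d s pn) :
    Realizable d (reflectPattern s) fun k => (pn k).swap := by
  obtain ⟨P, hP, rfl, -, hsign, hroots⟩ := h
  have hdeg : (-X : ℝ[X]).natDegree = 1 := by simp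
  have hQ : C ((-1 : ℝ) ^ P.natDegree) = (-1 : ℝ[X]) ^ P.natDegree := by simp
  refine realizable_of_monic (P := C ((-1) ^ P.natDegree) * P.comp (-X)) ?_ ?_
    (fun i hi => ?_) (fun k hk => ?_)
  · rw [hQ]
    exact hP.neg_one_pow_natDegree_mul_comp_neg_X
  · rw [natDegree_C_mul (by simp), natDegree_comp, hdeg, mul_one]
  · have hcoeff : (C ((-1) ^ P.natDegree) * P.comp (-X)).coeff (P.natDegree - i) =
        (-1) ^ i * P.coeff (P.natDegree - i) := by
      have hneg : (-X : ℝ[X]) = C (-1) * X := by simp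
      have hpow : (-1 : ℝ) ^ P.natDegree * (-1) ^ (P.natDegree - i) = (-1) ^ i := by
        rw [← pow_add]
        exact neg_one_pow_congr (by grind)
      rw [coeff_C_mul, hneg, comp_C_mul_X_coeff, ← hpow]
      ring
    have hsq : ((-1 : ℝ) ^ i) * (-1) ^ i = 1 := by rw [← mul_pow]; simp
    calc (0 : ℝ) < s i * P.coeff (P.natDegree - i) := hsign i hi
      _ = _ := by
        rw [hcoeff, reflectPattern]
        push_cast
        linear_combination (-(s i * P.coeff (P.natDegree - i))) * hsq
  · rw [iterDeriv_C_mul_comp_neg_X]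
    exact (hroots k hk).C_mul_comp_neg_X (by simp)

lemma derivative_toPoly {R : Type*} [CommRing R] (a b c d : R) :
    derivative (Cubic.toPoly ⟨a, b, c, d⟩) = Cubic.toPoly ⟨0, 3 * a, 2 * b, c⟩ := by
  simp only [Cubic.toPoly, derivative_add, derivative_C_mul, derivative_X,
    derivative_C, C_mul, C_0]
  norm_num
  ring

end Realizability

section SmallDegree

variable {s : ℕ → ℤ} {pn : ℕ → ℕ × ℕ} {pos₀ neg₀ pos₁ neg₁ : ℕ}

namespace IsSAP

lemma realizable_one (h : IsSAP 1 s pn) (h0 : s 0 = 1) (h1 : s 1 = 1) : Realizable 1 s pn := by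
  refine realizable_of_monic (P := Cubic.toPoly ⟨0, 0, 1, 1⟩) Cubic.monic_of_c_eq_one'
    (Cubic.natDegree_of_c_ne_zero' one_ne_zero) (fun i hi => ?_) (fun k hk => ?_)
  · interval_cases i <;> simp [h0, h1]
  · interval_cases k
    rw [h.pair_linear h0 h1]
    exact countRoots_linear_neg (by norm_num)

lemma realizable_two_of_quadratic (h : IsSAP 2 s pn) (h0 : s 0 = 1) (h1 : s 1 = 1)
    (hpn₀ : pn 0 = (pos₀, neg₀)) {a b : ℝ} (ha : 0 < a) (hb : 0 < (-1) ^ pos₀ * b)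
    (hP : CountRoots (Cubic.toPoly ⟨0, 1, a, b⟩) pos₀ neg₀) : Realizable 2 s pn := by
  have h2 : s 2 = (-1) ^ pos₀ := by simpa [hpn₀] using (h.1 0 (by omega)).2.2.2.2
  refine realizable_of_monic (P := Cubic.toPoly ⟨0, 1, a, b⟩) Cubic.monic_of_b_eq_one'
    (Cubic.natDegree_of_b_ne_zero' one_ne_zero) (fun i hi => ?_) (fun k hk => ?_)
  · interval_cases i <;> simp [h0, h1, h2, ha, hb]
  · interval_cases k
    · rwa [hpn₀]
    · rw [h.pair_linear h0 h1]
      simpa [iterDeriv, derivative_toPoly] using countRoots_linear_neg (m := 2) (by positivity)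

lemma realizable_two (h : IsSAP 2 s pn) (hs : IsSignPattern 2 s) (h1 : s 1 = 1) :
    Realizable 2 s pn := by
  obtain hpn₀ | hpn₀ | hpn₀ := h.pair_quadratic hs h1
  · refine h.realizable_two_of_quadratic hs.1 h1 hpn₀ (a := 3) (b := 2) ?_ ?_
      (countRoots_quadratic_neg_neg ?_ ?_ ?_) <;>
    norm_num [discrim]
  · refine h.realizable_two_of_quadratic hs.1 h1 hpn₀ (a := 1) (b := 1) ?_ ?_
      (countRoots_quadratic_none ?_) <;>
    norm_num [discrim]
  · refine h.realizable_two_of_quadratic hs.1 h1 hpn₀ (a := 1) (b := -1) ?_ ?_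
      (countRoots_quadratic_pos_neg ?_) <;>
    norm_num

lemma realizable_three_of_cubic (h : IsSAP 3 s pn) (h0 : s 0 = 1) (h1 : s 1 = 1)
    (hpn₁ : pn 1 = (pos₁, neg₁)) (hpn₀ : pn 0 = (pos₀, neg₀)) {a b c : ℝ} (ha : 0 < a)
    (hb : 0 < (-1) ^ pos₁ * b) (hc : 0 < (-1) ^ pos₀ * c)
    (hP' : CountRoots (Cubic.toPoly ⟨0, 3, 2 * a, b⟩) pos₁ neg₁)
    (hP : CountRoots (Cubic.toPoly ⟨1, a, b, c⟩) pos₀ neg₀) : Realizable 3 s pn := by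
  have h2 : s 2 = (-1) ^ pos₁ := by simpa [hpn₁] using (h.1 1 (by omega)).2.2.2.2
  have h3 : s 3 = (-1) ^ pos₀ := by simpa [hpn₀] using (h.1 0 (by omega)).2.2.2.2
  refine realizable_of_monic (P := Cubic.toPoly ⟨1, a, b, c⟩) Cubic.monic_of_a_eq_one'
    (Cubic.natDegree_of_a_ne_zero' one_ne_zero) (fun i hi => ?_) (fun k hk => ?_)
  · interval_cases i <;> simp [h0, h1, h2, h3, ha, hb, hc]
  · interval_cases k
    · rwa [hpn₀]
    · rw [hpn₁]
      simpa [iterDeriv, derivative_toPoly] using hP'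
    · rw [h.pair_linear h0 h1]
      simpa [iterDeriv, derivative_toPoly] using
        countRoots_linear_neg (m := 2 * 3) (b := 2 * a) (by positivity)

lemma realizable_three_of_factor (h : IsSAP 3 s pn) (h0 : s 0 = 1) (h1 : s 1 = 1)
    (hpn₁ : pn 1 = (pos₁, neg₁)) (hpn₀ : pn 0 = (pos₀, neg₀)) {r u v : ℝ} (ha : 0 < u - r)
    (hb : 0 < (-1) ^ pos₁ * (v - r * u)) (hc : 0 < (-1) ^ pos₀ * -(r * v))
    (hP' : CountRoots (Cubic.toPoly ⟨0, 3, 2 * (u - r), v - r * u⟩) pos₁ neg₁)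
    (hP : CountRoots ((X - C r) * Cubic.toPoly ⟨0, 1, u, v⟩) pos₀ neg₀) : Realizable 3 s pn := by
  have hfactor : (X - C r) * Cubic.toPoly ⟨0, 1, u, v⟩ =
      Cubic.toPoly ⟨1, u - r, v - r * u, -(r * v)⟩ := by
    simp only [Cubic.toPoly, C_0, C_1, C_sub, C_neg, C_mul]
    ring
  exact h.realizable_three_of_cubic h0 h1 hpn₁ hpn₀ ha hb hc hP' (hfactor ▸ hP)

lemma realizable_three_of_pair_eq_zero_two (h : IsSAP 3 s pn) (h0 : s 0 = 1)
    (h1 : s 1 = 1) (hpn₁ : pn 1 = (0, 2))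
    (hpn₀ : pn 0 = (0, 3) ∨ pn 0 = (0, 1) ∨ pn 0 = (1, 2) ∨ pn 0 = (1, 0)) :
    Realizable 3 s pn := by
  obtain hpn₀ | hpn₀ | hpn₀ | hpn₀ := hpn₀
  · refine h.realizable_three_of_factor h0 h1 hpn₁ hpn₀ (r := -1) (u := 5) (v := 6) ?_ ?_ ?_
      (countRoots_quadratic_neg_neg ?_ ?_ ?_)
      ((countRoots_quadratic_neg_neg ?_ ?_ ?_).X_sub_C_mul_of_neg ?_ ?_) <;>
    norm_num [discrim, Cubic.toPoly]
  · refine h.realizable_three_of_factor h0 h1 hpn₁ hpn₀ (r := -2) (u := 0) (v := 1) ?_ ?_ ?_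
      (countRoots_quadratic_neg_neg ?_ ?_ ?_)
      ((countRoots_quadratic_none ?_).X_sub_C_mul_of_neg ?_ ?_) <;>
    norm_num [discrim, Cubic.toPoly]
  · refine h.realizable_three_of_factor h0 h1 hpn₁ hpn₀ (r := 1) (u := 5) (v := 6) ?_ ?_ ?_
      (countRoots_quadratic_neg_neg ?_ ?_ ?_)
      ((countRoots_quadratic_neg_neg ?_ ?_ ?_).X_sub_C_mul_of_pos ?_ ?_) <;>
    norm_num [discrim, Cubic.toPoly]
  · refine h.realizable_three_of_factor h0 h1 hpn₁ hpn₀ (r := 1) (u := 3) (v := 4) ?_ ?_ ?_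
      (countRoots_quadratic_neg_neg ?_ ?_ ?_)
      ((countRoots_quadratic_none ?_).X_sub_C_mul_of_pos ?_ ?_) <;>
    norm_num [discrim, Cubic.toPoly]

lemma realizable_three_of_pair_eq_zero_zero (h : IsSAP 3 s pn) (h0 : s 0 = 1)
    (h1 : s 1 = 1) (hpn₁ : pn 1 = (0, 0))
    (hpn₀ : pn 0 = (0, 1) ∨ pn 0 = (1, 0)) :
    Realizable 3 s pn := by
  obtain hpn₀ | hpn₀ := hpn₀
  · refine h.realizable_three_of_factor h0 h1 hpn₁ hpn₀ (r := -1) (u := 0) (v := 1) ?_ ?_ ?_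
      (countRoots_quadratic_none ?_)
      ((countRoots_quadratic_none ?_).X_sub_C_mul_of_neg ?_ ?_) <;>
    norm_num [discrim, Cubic.toPoly]
  · refine h.realizable_three_of_factor h0 h1 hpn₁ hpn₀ (r := 1) (u := 2) (v := 3) ?_ ?_ ?_
      (countRoots_quadratic_none ?_)
      ((countRoots_quadratic_none ?_).X_sub_C_mul_of_pos ?_ ?_) <;>
    norm_num [discrim, Cubic.toPoly]

lemma realizable_three_of_pair_eq_one_one (h : IsSAP 3 s pn) (h0 : s 0 = 1)
    (h1 : s 1 = 1) (hpn₁ : pn 1 = (1, 1))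
    (hpn₀ : pn 0 = (2, 1) ∨ pn 0 = (0, 1) ∨ pn 0 = (1, 2) ∨ pn 0 = (1, 0)) :
    Realizable 3 s pn := by
  obtain hpn₀ | hpn₀ | hpn₀ | hpn₀ := hpn₀
  · refine h.realizable_three_of_factor h0 h1 hpn₁ hpn₀ (r := 1) (u := 2) (v := -8) ?_ ?_ ?_
      (countRoots_quadratic_pos_neg ?_)
      ((countRoots_quadratic_pos_neg ?_).X_sub_C_mul_of_pos ?_ ?_) <;>
    norm_num [discrim, Cubic.toPoly]
  · refine h.realizable_three_of_factor h0 h1 hpn₁ hpn₀ (r := -2) (u := -1) (v := 1) ?_ ?_ ?_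
      (countRoots_quadratic_pos_neg ?_)
      ((countRoots_quadratic_none ?_).X_sub_C_mul_of_neg ?_ ?_) <;>
    norm_num [discrim, Cubic.toPoly]
  · refine h.realizable_three_of_factor h0 h1 hpn₁ hpn₀ (r := 1) (u := 3) (v := 2) ?_ ?_ ?_
      (countRoots_quadratic_pos_neg ?_)
      ((countRoots_quadratic_neg_neg ?_ ?_ ?_).X_sub_C_mul_of_pos ?_ ?_) <;>
    norm_num [discrim, Cubic.toPoly]
  · refine h.realizable_three_of_factor h0 h1 hpn₁ hpn₀ (r := 2) (u := 3) (v := 5) ?_ ?_ ?_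
      (countRoots_quadratic_pos_neg ?_)
      ((countRoots_quadratic_none ?_).X_sub_C_mul_of_pos ?_ ?_) <;>
    norm_num [discrim, Cubic.toPoly]

lemma realizable_three (h : IsSAP 3 s pn) (hs : IsSignPattern 3 s) (h1 : s 1 = 1) :
    Realizable 3 s pn := by
  obtain ⟨hpn₁, hpn₀⟩ | ⟨hpn₁, hpn₀⟩ | ⟨hpn₁, hpn₀⟩ := h.pair_cubic hs h1
  · exact h.realizable_three_of_pair_eq_zero_two hs.1 h1 hpn₁ hpn₀
  · exact h.realizable_three_of_pair_eq_zero_zero hs.1 h1 hpn₁ hpn₀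
  · exact h.realizable_three_of_pair_eq_one_one hs.1 h1 hpn₁ hpn₀

end IsSAP

end SmallDegree

/-- For `d = 1, 2, 3`, every couple (sign pattern, SAP) is realizable. -/
theorem stmt6 (d : ℕ) (hd : d = 1 ∨ d = 2 ∨ d = 3) (s : ℕ → ℤ)
    (hs : IsSignPattern d s) (pn : ℕ → ℕ × ℕ) (hpn : IsSAP d s pn) :
    Realizable d s pn := by
  wlog h1 : s 1 = 1 generalizing s pn
  · have hreflect : reflectPattern s 1 = 1 := by
      simp [reflectPattern, (hs.2 1 (by omega)).resolve_left h1]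
    simpa using (this _ hs.reflect _ (hpn.reflect hs) hreflect).reflect
  rcases hd with rfl | rfl | rfl
  · exact hpn.realizable_one hs.1 h1
  · exact hpn.realizable_two hs h1
  · exact hpn.realizable_three hs h1
end
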